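/- arXiv:physics/9705040 — 5 statements merged into one kernel-verified Lean document; each statement's English description precedes it below -/
import Mathlib

section
/- (Lemma A.2, eq. (A.8).) Let q be a path and ξ, η smooth vector fields. Define, for spatial indices i,j: ∂_i η̃^j(t) := (∂_i η^j)(q(t)) − (∂_i η^0)(q(t)) q̇^j(t), and ∂_j ξ̃̇^i(t) := q̇^ρ(t)(∂_ρ∂_j ξ^i)(q(t)) − q̇^ρ(t)(∂_ρ∂_j ξ^0)(q(t)) q̇^i(t) − (∂_j ξ^0)(q(t)) q̈^i(t) (the x^j-partial of dξ̃^i/dt with q, q̇, q̈ treated as independent). Also set ⟨∂²f⟩(t) := q̇^ρ(t) q̇^σ(t)(∂_ρ∂_σ f)(q(t)) for smooth f on ℝ^N. Then for all t ∈ ℝ: ∑_{i,j=1}^{N−1} ∂_j ξ̃̇^i(t) ∂_i η̃^j(t) = ∑_{μ,ν=0}^{N−1} (d/dt)[(∂_ν ξ^μ)(q(t))]·(∂_μ η^ν)(q(t)) + ∑_{ν} (∂_ν ξ^0)(q(t)) ⟨∂²η^ν⟩(t) − ∑_{μ} ⟨∂²ξ^μ⟩(t) (∂_μ η^0)(q(t))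 − (d²/dt²)[ξ^0(q(t))] · (d/dt)[η^0(q(t))] − (d/dt)[ξ^0(q(t))] · ⟨∂²η^0⟩(t) + ⟨∂²ξ^0⟩(t) · (d/dt)[η^0(q(t))] + (d/dt)[ (d/dt)[ξ^0(q(t))]·(d/dt)[η^0(q(t))] − ∑_{ν} (∂_ν ξ^0)(q(t)) (d/dt)[η^ν(q(t))] ]. -/
open Finset

/-- Partial derivative `∂_μ f` of a function on `ℝ^N = (Fin N → ℝ)`. -/
noncomputable def pd {N : ℕ} (f : (Fin N → ℝ) → ℝ) (μ : Fin N) (x : Fin N → ℝ) : ℝ :=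
  fderiv ℝ f x (Pi.single μ 1)

/-- Second partial derivative `∂_μ ∂_ν f`. -/
noncomputable def pd2 {N : ℕ} (f : (Fin N → ℝ) → ℝ) (μ ν : Fin N) (x : Fin N → ℝ) : ℝ :=
  pd (fun y => pd f ν y) μ x

/-- The contraction `⟨∂²f⟩(t) = q̇^ρ(t) q̇^σ(t) (∂_ρ∂_σ f)(q(t))`. -/
noncomputable def contr2 {N : ℕ} (q : ℝ → Fin N → ℝ) (f : (Fin N → ℝ) → ℝ) (t : ℝ) : ℝ :=
  ∑ ρ, ∑ σ, deriv (fun s => q s ρ) t * deriv (fun s => q s σ) t * pd2 f ρ σ (q t)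

/-- Chain rule along a curve, in coordinates. -/
theorem hasDerivAt_comp_path {N : ℕ} {q : ℝ → Fin N → ℝ} {f : (Fin N → ℝ) → ℝ} {t : ℝ}
    (hq : DifferentiableAt ℝ q t) (hf : DifferentiableAt ℝ f (q t)) :
    HasDerivAt (fun s => f (q s)) (∑ ρ, deriv (fun s => q s ρ) t * pd f ρ (q t)) t := by
  have hd : HasDerivAt q (fun ρ => deriv (fun s => q s ρ) t) t :=
    hasDerivAt_pi.2 fun ρ => (differentiableAt_pi.1 hq ρ).hasDerivAt
  have h := hf.hasFDerivAt.comp_hasDerivAt t hd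
  rw [pi_eq_sum_univ' (fun ρ => deriv (fun s => q s ρ) t)] at h
  simpa [pd, Function.comp_def, Pi.single, Function.update_apply] using h

theorem contDiff_pd {N : ℕ} {f : (Fin N → ℝ) → ℝ} (hf : ContDiff ℝ (⊤ : ℕ∞) f) (μ : Fin N) :
    ContDiff ℝ (⊤ : ℕ∞) (fun y => pd f μ y) :=
  (hf.fderiv_right (m := (⊤ : ℕ∞)) (by norm_cast)).clm_apply contDiff_const

/-- The second derivative of a smooth function along a smooth curve. -/
theorem hasDerivAt_deriv_comp_path {N : ℕ} {q : ℝ → Fin N → ℝ} {f : (Fin N → ℝ) → ℝ}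
    (hq : ContDiff ℝ (⊤ : ℕ∞) q) (hf : ContDiff ℝ (⊤ : ℕ∞) f) (t : ℝ) :
    HasDerivAt (deriv fun s => f (q s))
      (contr2 q f t + ∑ ρ, deriv (deriv fun s => q s ρ) t * pd f ρ (q t)) t := by
  have hqd : Differentiable ℝ q := hq.differentiable (by simp)
  have hderiv : (deriv fun s => f (q s)) =
      fun s => ∑ ρ, deriv (fun u => q u ρ) s * pd f ρ (q s) :=
    funext fun s => (hasDerivAt_comp_path (hqd s) (hf.differentiable (by simp) _)).deriv
  have hqdd (ρ : Fin N) : Differentiable ℝ (deriv fun s => q s ρ) :=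
    ((contDiff_infty_iff_deriv.1 (contDiff_pi.1 hq ρ)).2).differentiable (by simp)
  rw [hderiv]
  refine (HasDerivAt.fun_sum fun ρ _ => ((hqdd ρ t).hasDerivAt.mul
    (hasDerivAt_comp_path (hqd t)
      ((contDiff_pd hf ρ).differentiable (by simp) _)))).congr_deriv ?_
  rw [sum_add_distrib, add_comm, contr2, sum_comm]
  simp only [mul_sum]
  congr 1
  refine sum_congr rfl fun ρ _ => sum_congr rfl fun σ _ => ?_
  rw [pd2]
  ring

theorem contr2_eq_sum_deriv_pd {N : ℕ} {q : ℝ → Fin N → ℝ} {f : (Fin N → ℝ) → ℝ} (t : ℝ) :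
    contr2 q f t = ∑ ν, (∑ ρ, deriv (fun s => q s ρ) t * pd2 f ρ ν (q t)) *
      deriv (fun s => q s ν) t := by
  rw [contr2, sum_comm]
  simp only [sum_mul]
  exact sum_congr rfl fun ρ _ => sum_congr rfl fun σ _ => by ring

/-- Expansion of the spatial contraction: the `0`-components vanish because `a 0 = 1`, `b 0 = 0`,
so the sum may be taken over all indices. -/
theorem sum_erase_zero_contraction {N : ℕ} [NeZero N] (a b : Fin N → ℝ) (ha : a 0 = 1)
    (hb : b 0 = 0) (D H : Fin N → Fin N → ℝ) (x : Fin N → ℝ) :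
    (∑ i ∈ univ.erase (0 : Fin N), ∑ j ∈ univ.erase (0 : Fin N),
      (D i j - D 0 j * a i - x j * b i) * (H j i - H 0 i * a j)) =
    (∑ i, ∑ j, D i j * H j i) - (∑ i, (∑ j, D i j * a j) * H 0 i)
      - (∑ j, D 0 j * ∑ i, a i * H j i) + (∑ j, D 0 j * a j) * (∑ i, a i * H 0 i)
      - (∑ j, x j * ∑ i, b i * H j i) + (∑ j, a j * x j) * (∑ i, b i * H 0 i) := by
  have hinner (i : Fin N) : (∑ j ∈ univ.erase (0 : Fin N),
      (D i j - D 0 j * a i - x j * b i) * (H j i - H 0 i * a j)) =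
      ∑ j, (D i j - D 0 j * a i - x j * b i) * (H j i - H 0 i * a j) :=
    sum_erase _ (by rw [ha]; ring)
  simp only [hinner]
  rw [sum_erase _ (by simp [ha, hb])]
  have hswap_a : (∑ j, D 0 j * ∑ i, a i * H j i) = ∑ i, ∑ j, D 0 j * (a i * H j i) := by
    simp only [mul_sum]; exact sum_comm
  have hswap_b : (∑ j, x j * ∑ i, b i * H j i) = ∑ i, ∑ j, x j * (b i * H j i) := by
    simp only [mul_sum]; exact sum_comm
  rw [hswap_a, hswap_b, mul_sum, mul_sum]
  simp only [sum_mul, ← sum_add_distrib, ← sum_sub_distrib]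
  exact sum_congr rfl fun i _ => sum_congr rfl fun j _ => by ring

/-- Lemma A.2, eq. (A.8): with `ξ̃^i = ξ^i − ξ^0 q̇^i`, one has
`∂_j ξ̃̇^i ∂_i η̃^j = ∂_ν ξ̇^μ ∂_μ η^ν + ∂_ν ξ^0 ⟨∂²η^ν⟩ − ⟨∂²ξ^μ⟩ ∂_μ η^0
 − ξ̈^0 η̇^0 − ξ̇^0 ⟨∂²η^0⟩ + ⟨∂²ξ^0⟩ η̇^0 + d/dt(ξ̇^0 η̇^0 − ∂_ν ξ^0 η̇^ν)`. -/
theorem lemma_A2_eq_A8 (N : ℕ) [NeZero N]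
    (q : ℝ → Fin N → ℝ) (hq : ContDiff ℝ (⊤ : ℕ∞) q) (hq0 : ∀ t, q t 0 = t)
    (ξ η : Fin N → (Fin N → ℝ) → ℝ)
    (hξ : ∀ μ, ContDiff ℝ (⊤ : ℕ∞) (ξ μ)) (hη : ∀ μ, ContDiff ℝ (⊤ : ℕ∞) (η μ)) (t : ℝ) :
    (∑ i ∈ Finset.univ.erase (0 : Fin N), ∑ j ∈ Finset.univ.erase (0 : Fin N),
      ((∑ ρ, deriv (fun s => q s ρ) t * pd2 (ξ i) ρ j (q t))
          - (∑ ρ, deriv (fun s => q s ρ) t * pd2 (ξ 0) ρ j (q t))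
              * deriv (fun s => q s i) t
          - pd (ξ 0) j (q t) * deriv (deriv (fun s => q s i)) t)
        * (pd (η j) i (q t) - pd (η 0) i (q t) * deriv (fun s => q s j) t))
    =
    (∑ μ, ∑ ν, deriv (fun s => pd (ξ μ) ν (q s)) t * pd (η ν) μ (q t))
      + (∑ ν, pd (ξ 0) ν (q t) * contr2 q (η ν) t)
      - (∑ μ, contr2 q (ξ μ) t * pd (η 0) μ (q t))
      - deriv (deriv (fun s => ξ 0 (q s))) t * deriv (fun s => η 0 (q s)) t
      - deriv (fun s => ξ 0 (q s)) t * contr2 q (η 0) t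
      + contr2 q (ξ 0) t * deriv (fun s => η 0 (q s)) t
      + deriv (fun s =>
          deriv (fun u => ξ 0 (q u)) s * deriv (fun u => η 0 (q u)) s
            - ∑ ν, pd (ξ 0) ν (q s) * deriv (fun u => η ν (q u)) s) t := by
  have hqd : Differentiable ℝ q := hq.differentiable (by simp)
  have hfirst {f : (Fin N → ℝ) → ℝ} (hf : ContDiff ℝ (⊤ : ℕ∞) f) :=
    hasDerivAt_comp_path (hqd t) (hf.differentiable (by simp) (q t))
  have hpd {f : (Fin N → ℝ) → ℝ} (hf : ContDiff ℝ (⊤ : ℕ∞) f) (ν : Fin N) :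
      HasDerivAt (fun s => pd f ν (q s))
        (∑ ρ, deriv (fun s => q s ρ) t * pd2 f ρ ν (q t)) t :=
    hfirst (contDiff_pd hf ν)
  have hq1 : (deriv fun s => q s 0) = fun _ => 1 := by
    simp [hq0]
  have htotal := ((hasDerivAt_deriv_comp_path hq (hξ 0) t).mul
    (hasDerivAt_deriv_comp_path hq (hη 0) t)).sub
    (HasDerivAt.fun_sum fun ν (_ : ν ∈ univ) =>
      (hpd (hξ 0) ν).mul (hasDerivAt_deriv_comp_path hq (hη ν) t))
  rw [sum_erase_zero_contraction (fun i => deriv (fun s => q s i) t)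
    (fun i => deriv (deriv fun s => q s i) t) (by simp [hq1]) (by simp [hq1])
    (fun i j => ∑ ρ, deriv (fun s => q s ρ) t * pd2 (ξ i) ρ j (q t))
    (fun j i => pd (η j) i (q t)) (fun j => pd (ξ 0) j (q t))]
  refine Eq.trans ?_ (congrArg _ htotal.deriv.symm)
  simp only [(hpd (hξ _) _).deriv, (hfirst (hξ _)).deriv, (hfirst (hη _)).deriv,
    (hasDerivAt_deriv_comp_path hq (hξ 0) t).deriv, ← contr2_eq_sum_deriv_pd,
    mul_add, sum_add_distrib]
  ring
end

section
/- (Transformation law (2.1) of S_n in the realization (3.8), classical part of Theorem 3.1.) Let ξ be a smooth vector field with admissible components ξ^μ, let g_{ν1…νn} be a family of admissible functions, and let (q_ε) be a variation of loops along ξ. Then the function ε ↦ S_n^{ν1…νn}(g)[q_ε] is differentiable at ε = 0 and (d/dε)|_{ε=0} S_n^{ν1…νn}(g)[q_ε] = S_n^{ν1…νn}( ξ^μ ∂_μ g_{ν1…νn} + ∑_{j=1}^{n} (∂_{νj} ξ^μ) g_{ν1…μ…νn} )[q_0] − (n−1) S_{n+1}^{μν1…νn}( (∂_μ ξ^0)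 g_{ν1…νn} )[q_0], where in the second term the argument indexed by μν_1…ν_n is (∂_μ ξ^0) g_{ν1…νn}. -/
open Finset Real

/-- A function on `ℝ^N` is admissible if it is smooth and `2π`-periodic in `x^0`. -/
def Admissible {N : ℕ} [NeZero N] (f : (Fin N → ℝ) → ℝ) : Prop :=
  ContDiff ℝ (⊤ : ℕ∞) f ∧ ∀ x, f (x + Pi.single 0 (2 * π)) = f x

/-- A loop is a smooth map `q : ℝ → ℝ^N` with `q^0(t) = t` and each spatial
component `2π`-periodic. -/
def IsLoop {N : ℕ} [NeZero N] (q : ℝ → Fin N → ℝ) : Prop :=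
  ContDiff ℝ (⊤ : ℕ∞) q ∧ (∀ t, q t 0 = t) ∧ ∀ t, ∀ i ≠ (0 : Fin N), q (t + 2 * π) i = q t i

/-- A variation of loops along the vector field `ξ`: a jointly smooth family of loops
`q_ε` with `∂_ε q_ε^μ(t)|_{ε=0} = ξ^μ(q₀(t)) − q̇₀^μ(t) ξ^0(q₀(t))`. -/
def IsVariation {N : ℕ} [NeZero N] (ξ : Fin N → (Fin N → ℝ) → ℝ)
    (Q : ℝ → ℝ → Fin N → ℝ) : Prop :=
  (∀ ε, IsLoop (Q ε)) ∧ ContDiff ℝ (⊤ : ℕ∞) (fun p : ℝ × ℝ => Q p.1 p.2) ∧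
    ∀ t μ, deriv (fun ε => Q ε t μ) 0
      = ξ μ (Q 0 t) - deriv (fun s => Q 0 s μ) t * ξ 0 (Q 0 t)

/-- `S_n^{ν₁…νₙ}(g)[q] = (1/2πi) ∫₀^{2π} q̇^{ν₁}⋯q̇^{νₙ} g_{ν₁…νₙ}(q(t)) dt`,
summed over all the indices. -/
noncomputable def Sop {N : ℕ} (n : ℕ) (g : (Fin n → Fin N) → (Fin N → ℝ) → ℝ)
    (q : ℝ → Fin N → ℝ) : ℂ :=
  (1 / (2 * π * Complex.I)) *
    ((∫ t in (0:ℝ)..(2 * π), ∑ ν : Fin n → Fin N,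
        (∏ l, deriv (fun s => q s (ν l)) t) * g ν (q t) : ℝ) : ℂ)

open scoped ContDiff

theorem hasDerivAt_pair_left (f : ℝ × ℝ → ℝ) (hf : ContDiff ℝ 1 f) (e t : ℝ) :
    HasDerivAt (fun ε => f (ε, t)) (fderiv ℝ f (e, t) (1, 0)) e :=
  (hf.differentiable one_ne_zero (e, t)).hasFDerivAt.comp_hasDerivAt e
    ((hasDerivAt_id e).prodMk (hasDerivAt_const e t))

theorem hasDerivAt_pair_right (f : ℝ × ℝ → ℝ) (hf : ContDiff ℝ 1 f) (e t : ℝ) :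
    HasDerivAt (fun s => f (e, s)) (fderiv ℝ f (e, t) (0, 1)) t :=
  (hf.differentiable one_ne_zero (e, t)).hasFDerivAt.comp_hasDerivAt t
    ((hasDerivAt_const t e).prodMk (hasDerivAt_id t))

/-- Mixed partial derivatives commute. -/
theorem hasDerivAt_deriv_right (f : ℝ × ℝ → ℝ) (hf : ContDiff ℝ 2 f) (e t : ℝ) :
    HasDerivAt (fun ε => deriv (fun s => f (ε, s)) t)
      (deriv (fun s => deriv (fun ε => f (ε, s)) e) t) e := by
  have hf1 : ContDiff ℝ 1 f := hf.of_le one_le_two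
  have hfd : ContDiff ℝ 1 (fderiv ℝ f) := hf.fderiv_right (by norm_num)
  have happ (v : ℝ × ℝ) : ContDiff ℝ 1 fun p => fderiv ℝ f p v := hfd.clm_apply contDiff_const
  have hsecond (v p w : ℝ × ℝ) :
      fderiv ℝ (fun p => fderiv ℝ f p v) p w = fderiv ℝ (fderiv ℝ f) p w v := by
    rw [fderiv_clm_apply (hfd.differentiable one_ne_zero p) (differentiableAt_const v)]
    simp
  have hsymm : IsSymmSndFDerivAt ℝ f (e, t) :=
    hf.contDiffAt.isSymmSndFDerivAt (by simp)
  have h1 : (fun ε => deriv (fun s => f (ε, s)) t) = fun ε => fderiv ℝ f (ε, t) (0, 1) :=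
    funext fun ε => (hasDerivAt_pair_right f hf1 ε t).deriv
  have h2 : (fun s => deriv (fun ε => f (ε, s)) e) = fun s => fderiv ℝ f (e, s) (1, 0) :=
    funext fun s => (hasDerivAt_pair_left f hf1 e s).deriv
  rw [h1, h2, (hasDerivAt_pair_right _ (happ (1, 0)) e t).deriv, hsecond, hsymm, ← hsecond]
  exact hasDerivAt_pair_left _ (happ (0, 1)) e t

/-- Differentiation under the integral sign for a jointly `C^1` integrand. -/
theorem hasDerivAt_intervalIntegral_of_contDiff (f : ℝ × ℝ → ℝ) (hf : ContDiff ℝ 1 f)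
    (a b e : ℝ) :
    HasDerivAt (fun ε => ∫ t in a..b, f (ε, t))
      (∫ t in a..b, deriv (fun ε => f (ε, t)) e) e := by
  have hcont : Continuous fun p => fderiv ℝ f p (1, 0) :=
    (hf.continuous_fderiv one_ne_zero).clm_apply continuous_const
  obtain ⟨C, hC⟩ := ((isCompact_closedBall e 1).prod isCompact_uIcc).exists_bound_of_continuousOn
    (hcont.continuousOn (s := Metric.closedBall e 1 ×ˢ Set.uIcc a b))
  have hslice (ε : ℝ) : Continuous fun t => f (ε, t) :=
    hf.continuous.comp (Continuous.prodMk_right ε)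
  simp only [fun t => (hasDerivAt_pair_left f hf e t).deriv]
  refine (intervalIntegral.hasDerivAt_integral_of_dominated_loc_of_deriv_le
    (F' := fun ε t => fderiv ℝ f (ε, t) (1, 0)) (bound := fun _ => C)
    (Metric.closedBall_mem_nhds e one_pos)
    (.of_forall fun ε => (hslice ε).aestronglyMeasurable)
    ((hslice e).intervalIntegrable a b)
    (hcont.comp (Continuous.prodMk_right e)).aestronglyMeasurable
    (.of_forall fun t ht ε hε => hC (ε, t) ⟨hε, Set.uIoc_subset_uIcc ht⟩)
    intervalIntegrable_const
    (.of_forall fun t _ ε _ => hasDerivAt_pair_left f hf ε t)).2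

/-- Chain rule along a curve, in terms of partial derivatives. -/
theorem hasDerivAt_comp_pd {N : ℕ} {f : (Fin N → ℝ) → ℝ} (hf : Differentiable ℝ f)
    {x : ℝ → Fin N → ℝ} {x' : Fin N → ℝ} {s : ℝ} (hx : ∀ μ, HasDerivAt (fun r => x r μ) (x' μ) s) :
    HasDerivAt (fun r => f (x r)) (∑ μ, x' μ * pd f μ (x s)) s := by
  convert! (hf (x s)).hasFDerivAt.comp_hasDerivAt s (hasDerivAt_pi.2 hx) using 1
  conv_rhs => rw [pi_eq_sum_univ' x', map_sum]
  refine Finset.sum_congr rfl fun μ _ => ?_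
  rw [map_smul, smul_eq_mul, pd]

/-- The integrand of `Sop`, as a function of position and velocity. -/
noncomputable def lagrangian {N n : ℕ} (g : (Fin n → Fin N) → (Fin N → ℝ) → ℝ)
    (x v : Fin N → ℝ) : ℝ :=
  ∑ ν : Fin n → Fin N, (∏ l, v (ν l)) * g ν x

/-- The differential of `lagrangian g` at `(x, v)` in the direction `(x', v')`. -/
noncomputable def lagrangianDeriv {N n : ℕ} (g : (Fin n → Fin N) → (Fin N → ℝ) → ℝ)
    (x v x' v' : Fin N → ℝ) : ℝ :=
  ∑ ν : Fin n → Fin N, ((∑ j, (∏ l ∈ univ.erase j, v (ν l)) * v' (ν j)) * g ν x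
    + (∏ l, v (ν l)) * ∑ μ, x' μ * pd (g ν) μ x)

theorem hasDerivAt_lagrangian {N n : ℕ} {g : (Fin n → Fin N) → (Fin N → ℝ) → ℝ}
    (hg : ∀ ν, Differentiable ℝ (g ν)) {x v : ℝ → Fin N → ℝ} {x' v' : Fin N → ℝ} {s : ℝ}
    (hx : ∀ μ, HasDerivAt (fun r => x r μ) (x' μ) s)
    (hv : ∀ μ, HasDerivAt (fun r => v r μ) (v' μ) s) :
    HasDerivAt (fun r => lagrangian g (x r) (v r)) (lagrangianDeriv g (x s) (v s) x' v') s := by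
  refine HasDerivAt.fun_sum fun ν _ => ?_
  have hprod := HasDerivAt.fun_finsetProd (u := univ) fun l _ => hv (ν l)
  simpa only [smul_eq_mul] using hprod.fun_mul (hasDerivAt_comp_pd (hg ν) hx)

theorem sum_update_reindex {N n : ℕ} (g : (Fin n → Fin N) → ℝ) (v : Fin N → ℝ)
    (D : Fin N → Fin N → ℝ) (j : Fin n) :
    ∑ ν : Fin n → Fin N, ((∏ l ∈ univ.erase j, v (ν l)) * ∑ ρ, v ρ * D (ν j) ρ) * g ν
      = ∑ ν : Fin n → Fin N, (∏ l, v (ν l)) * ∑ μ, D μ (ν j) * g (Function.update ν j μ) := by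
  simp only [Finset.mul_sum, Finset.sum_mul, ← Fintype.sum_prod_type']
  let σ : (Fin n → Fin N) × Fin N → (Fin n → Fin N) × Fin N :=
    fun p => (Function.update p.1 j p.2, p.1 j)
  have hσ : Function.Involutive σ := fun p => by simp [σ]
  refine Fintype.sum_equiv hσ.toPerm _ _ fun p => ?_
  have hprod : ∏ l, v (Function.update p.1 j p.2 l)
      = v p.2 * ∏ l ∈ univ.erase j, v (p.1 l) := by
    rw [← Finset.mul_prod_erase univ _ (Finset.mem_univ j), Function.update_self]
    congr 1
    exact Finset.prod_congr rfl fun l hl => by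
      rw [Function.update_of_ne (Finset.ne_of_mem_erase hl)]
  simp only [Function.Involutive.coe_toPerm, σ, hprod, Function.update_self,
    Function.update_idem, Function.update_eq_self]
  ring

theorem lagrangianDeriv_field {N n : ℕ} (g : (Fin n → Fin N) → (Fin N → ℝ) → ℝ)
    (ξ : Fin N → (Fin N → ℝ) → ℝ) (x v : Fin N → ℝ) :
    lagrangianDeriv g x v (fun μ => ξ μ x) (fun μ => ∑ ρ, v ρ * pd (ξ μ) ρ x)
      = lagrangian (fun ν x => (∑ μ, ξ μ x * pd (g ν) μ x)
          + ∑ j, ∑ μ, pd (ξ μ) (ν j) x * g (Function.update ν j μ) x) x v := by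
  simp only [lagrangianDeriv, lagrangian, mul_add, Finset.sum_add_distrib]
  rw [add_comm]
  congr 1
  simp only [Finset.sum_mul _ _ (g _ x)]
  simp only [Finset.mul_sum univ (fun j => ∑ μ, _)]
  rw [Finset.sum_comm]
  conv_rhs => rw [Finset.sum_comm]
  exact Finset.sum_congr rfl fun j _ =>
    sum_update_reindex (fun ν => g ν x) v (fun μ ρ => pd (ξ μ) ρ x) j

/-- Euler's identity: the integrand is homogeneous of degree `n` in the velocity. -/
theorem lagrangianDeriv_velocity {N n : ℕ} (g : (Fin n → Fin N) → (Fin N → ℝ) → ℝ)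
    (x v : Fin N → ℝ) :
    lagrangianDeriv g x v 0 v = n * lagrangian g x v := by
  simp [lagrangianDeriv, lagrangian, Finset.prod_erase_mul, Finset.mul_sum, mul_assoc]

theorem lagrangianDeriv_comb {N n : ℕ} (g : (Fin n → Fin N) → (Fin N → ℝ) → ℝ)
    (x v a b y w z : Fin N → ℝ) (c d : ℝ) :
    lagrangianDeriv g x v (fun μ => a μ - y μ * c) (fun μ => b μ - (w μ * c + z μ * d))
      = lagrangianDeriv g x v a b - c * lagrangianDeriv g x v y w
        - d * lagrangianDeriv g x v 0 z := by
  simp only [lagrangianDeriv, Finset.mul_sum univ _ c, Finset.mul_sum univ _ d,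
    ← Finset.sum_sub_distrib]
  refine Finset.sum_congr rfl fun ν _ => ?_
  have h1 : ∑ j, (∏ l ∈ univ.erase j, v (ν l)) * (b (ν j) - (w (ν j) * c + z (ν j) * d))
      = (∑ j, (∏ l ∈ univ.erase j, v (ν l)) * b (ν j))
        - c * (∑ j, (∏ l ∈ univ.erase j, v (ν l)) * w (ν j))
        - d * (∑ j, (∏ l ∈ univ.erase j, v (ν l)) * z (ν j)) := by
    simp only [Finset.mul_sum, ← Finset.sum_sub_distrib]
    exact Finset.sum_congr rfl fun j _ => by ring
  have h2 : ∑ μ, (a μ - y μ * c) * pd (g ν) μ x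
      = ∑ μ, a μ * pd (g ν) μ x - c * ∑ μ, y μ * pd (g ν) μ x := by
    simp only [Finset.mul_sum, ← Finset.sum_sub_distrib]
    exact Finset.sum_congr rfl fun μ _ => by ring
  rw [h1, h2]
  simp only [Pi.zero_apply, zero_mul, Finset.sum_const_zero]
  ring

theorem lagrangian_succ {N n : ℕ} (g : (Fin n → Fin N) → (Fin N → ℝ) → ℝ)
    (h : Fin N → (Fin N → ℝ) → ℝ) (x v : Fin N → ℝ) :
    lagrangian (fun (κ : Fin (n + 1) → Fin N) x => h (κ 0) x * g (fun l => κ l.succ) x) x v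
      = (∑ μ, v μ * h μ x) * lagrangian g x v := by
  simp only [lagrangian, Finset.sum_mul_sum, ← Fintype.sum_prod_type']
  refine (Fintype.sum_equiv (Fin.consEquiv fun _ => Fin N) _ _ fun p => ?_).symm
  simp only [Fin.prod_univ_succ, Fin.consEquiv_apply, Fin.cons_zero, Fin.cons_succ]
  ring

theorem continuous_lagrangian {N n : ℕ} {g : (Fin n → Fin N) → (Fin N → ℝ) → ℝ}
    (hg : ∀ ν, Continuous (g ν)) {x v : ℝ → Fin N → ℝ} (hx : Continuous x)
    (hv : ∀ μ, Continuous fun t => v t μ) :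
    Continuous fun t => lagrangian g (x t) (v t) :=
  continuous_finsetSum _ fun ν _ =>
    (continuous_finsetProd _ fun l _ => hv (ν l)).mul ((hg ν).comp hx)

theorem Admissible.continuous_pd {N : ℕ} [NeZero N] {f : (Fin N → ℝ) → ℝ} (hf : Admissible f)
    (μ : Fin N) : Continuous (pd f μ) :=
  (hf.1.continuous_fderiv (by simp)).clm_apply continuous_const

theorem IsLoop.apply_two_pi {N : ℕ} [NeZero N] {q : ℝ → Fin N → ℝ} (hq : IsLoop q) (t : ℝ) :
    q (t + 2 * π) = q t + Pi.single 0 (2 * π) := by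
  ext i
  by_cases hi : i = 0
  · subst hi
    simp [hq.2.1]
  · simp [hq.2.2 t i hi, hi]

theorem IsLoop.deriv_periodic {N : ℕ} [NeZero N] {q : ℝ → Fin N → ℝ} (hq : IsLoop q)
    (t : ℝ) (μ : Fin N) :
    deriv (fun s => q s μ) (t + 2 * π) = deriv (fun s => q s μ) t := by
  rw [← deriv_comp_add_const]
  simp only [hq.apply_two_pi, Pi.add_apply, deriv_add_const]

theorem Sop_eq_lagrangian {N n : ℕ} (g : (Fin n → Fin N) → (Fin N → ℝ) → ℝ)
    (q : ℝ → Fin N → ℝ) :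
    Sop n g q = (1 / (2 * π * Complex.I)) *
      ((∫ t in (0:ℝ)..(2 * π), lagrangian g (q t) fun μ => deriv (fun s => q s μ) t : ℝ) : ℂ) :=
  rfl

/-- Transformation law (2.1) of `S_n` in the realization (3.8): along a variation of
loops `q_ε` in the direction of `ξ`,
`(d/dε)|₀ S_n(g)[q_ε] = S_n(ξ^μ∂_μ g + ∑_j ∂_{νⱼ}ξ^μ g_{ν₁…μ…νₙ})[q₀]
  − (n−1) S_{n+1}((∂_μ ξ^0) g)[q₀]`. -/
theorem S_transformation_law (N : ℕ) [NeZero N] (n : ℕ)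
    (ξ : Fin N → (Fin N → ℝ) → ℝ) (hξ : ∀ μ, Admissible (ξ μ))
    (g : (Fin n → Fin N) → (Fin N → ℝ) → ℝ) (hg : ∀ ν, Admissible (g ν))
    (Q : ℝ → ℝ → Fin N → ℝ) (hQ : IsVariation ξ Q) :
    HasDerivAt (fun ε => Sop n g (Q ε))
      (Sop n (fun ν x =>
          (∑ μ, ξ μ x * pd (g ν) μ x)
            + ∑ j, ∑ μ, pd (ξ μ) (ν j) x * g (Function.update ν j μ) x) (Q 0)
        - ((n : ℂ) - 1) *
            Sop (n + 1) (fun κ x => pd (ξ 0) (κ 0) x * g (fun l => κ l.succ) x) (Q 0))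
      0 := by
  obtain ⟨hloop, hsmooth, hvar⟩ := hQ
  have hgd (ν) : Differentiable ℝ (g ν) := (hg ν).1.differentiable (by simp)
  have hcomp (μ : Fin N) : ContDiff ℝ ∞ fun p : ℝ × ℝ => Q p.1 p.2 μ := contDiff_pi.1 hsmooth μ
  have hvelQ (μ : Fin N) : ContDiff ℝ 1 fun p : ℝ × ℝ => deriv (fun s => Q p.1 s μ) p.2 := by
    have h1 : (fun p : ℝ × ℝ => deriv (fun s => Q p.1 s μ) p.2)
        = fun p => fderiv ℝ (fun p : ℝ × ℝ => Q p.1 p.2 μ) p (0, 1) := funext fun p =>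
      (hasDerivAt_pair_right _ ((hcomp μ).of_le (by simp)) p.1 p.2).deriv
    rw [h1]
    exact ((contDiff_infty.1 (hcomp μ) 2).fderiv_right (by norm_num)).clm_apply contDiff_const
  set q := Q 0
  set u : ℝ → Fin N → ℝ := fun t μ => deriv (fun s => q s μ) t
  have hqs (μ : Fin N) : ContDiff ℝ ∞ fun s => q s μ := contDiff_pi.1 (hloop 0).1 μ
  have hqd (t) (μ : Fin N) : HasDerivAt (fun s => q s μ) (u t μ) t :=
    ((hqs μ).differentiable (by simp) t).hasDerivAt
  have hus (μ : Fin N) : ContDiff ℝ 1 fun t => u t μ :=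
    (hvelQ μ).comp (contDiff_prodMk_right (0 : ℝ))
  have hud (t) (μ : Fin N) : HasDerivAt (fun s => u s μ) (deriv (fun s => u s μ) t) t :=
    ((hus μ).differentiable one_ne_zero t).hasDerivAt
  have hξd (t) (μ : Fin N) :
      HasDerivAt (fun s => ξ μ (q s)) (∑ ρ, u t ρ * pd (ξ μ) ρ (q t)) t :=
    hasDerivAt_comp_pd ((hξ μ).1.differentiable (by simp)) (hqd t)
  have hLd (t) : HasDerivAt (fun s => lagrangian g (q s) (u s))
      (lagrangianDeriv g (q t) (u t) (u t) fun μ => deriv (fun s => u s μ) t) t :=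
    hasDerivAt_lagrangian hgd (hqd t) (hud t)
  have hqc : Continuous q := (hloop 0).1.continuous
  have huc (μ : Fin N) : Continuous fun t => u t μ := (hus μ).continuous
  set A : (Fin n → Fin N) → (Fin N → ℝ) → ℝ := fun ν x =>
    (∑ μ, ξ μ x * pd (g ν) μ x)
      + ∑ j, ∑ μ, pd (ξ μ) (ν j) x * g (Function.update ν j μ) x with hA
  set B : (Fin (n + 1) → Fin N) → (Fin N → ℝ) → ℝ := fun κ x =>
    pd (ξ 0) (κ 0) x * g (fun l => κ l.succ) x with hB
  have hξc (μ) : Continuous (ξ μ) := (hξ μ).1.continuous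
  have hgc (ν) : Continuous (g ν) := (hg ν).1.continuous
  have hpξ (μ ρ) : Continuous (pd (ξ μ) ρ) := (hξ μ).continuous_pd ρ
  have hpg (ν μ) : Continuous (pd (g ν) μ) := (hg ν).continuous_pd μ
  have hAc : Continuous fun t => lagrangian A (q t) (u t) :=
    continuous_lagrangian (fun ν => by fun_prop) hqc huc
  have hBc : Continuous fun t => lagrangian B (q t) (u t) :=
    continuous_lagrangian (fun κ => by fun_prop) hqc huc
  -- the total derivative that integrates to zero around the loop
  have hTd (t) : HasDerivAt (fun s => ξ 0 (q s) * lagrangian g (q s) (u s))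
      ((∑ ρ, u t ρ * pd (ξ 0) ρ (q t)) * lagrangian g (q t) (u t) + ξ 0 (q t) *
        lagrangianDeriv g (q t) (u t) (u t) fun μ => deriv (fun s => u s μ) t) t :=
    (hξd t 0).mul (hLd t)
  have hTs : ContDiff ℝ 1 fun s => ξ 0 (q s) * lagrangian g (q s) (u s) := by
    have hq1 : ContDiff ℝ 1 q := (hloop 0).1.of_le (by simp)
    refine (((hξ 0).1.of_le (by simp)).comp hq1).mul (ContDiff.sum fun ν _ => ?_)
    exact (contDiff_prod fun l _ => hus (ν l)).mul (((hg ν).1.of_le (by simp)).comp hq1)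
  have hTzero : ∫ t in (0:ℝ)..(2 * π),
      deriv (fun s => ξ 0 (q s) * lagrangian g (q s) (u s)) t = 0 := by
    rw [intervalIntegral.integral_deriv_eq_sub
      (fun t _ => hTs.differentiable one_ne_zero t)
      ((hTs.continuous_deriv le_rfl).intervalIntegrable _ _)]
    have hend : q (2 * π) = q 0 + Pi.single 0 (2 * π) := by
      simpa using (hloop 0).apply_two_pi 0
    have huend : u (2 * π) = u 0 := by
      ext μ
      simpa using (hloop 0).deriv_periodic 0 μ
    simp only [hend, huend, (hξ 0).2, lagrangian, (hg _).2, sub_self]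
  -- the variation of the integrand
  have hεx (t) (μ : Fin N) : HasDerivAt (fun ε => Q ε t μ) (ξ μ (q t) - u t μ * ξ 0 (q t)) 0 := by
    rw [← hvar t μ]
    exact (hasDerivAt_pair_left _ ((hcomp μ).of_le (by simp)) 0 t).differentiableAt.hasDerivAt
  have hεv (t) (μ : Fin N) : HasDerivAt (fun ε => deriv (fun s => Q ε s μ) t)
      ((∑ ρ, u t ρ * pd (ξ μ) ρ (q t)) - (deriv (fun s => u s μ) t * ξ 0 (q t)
        + u t μ * ∑ ρ, u t ρ * pd (ξ 0) ρ (q t))) 0 := by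
    have h := hasDerivAt_deriv_right (fun p : ℝ × ℝ => Q p.1 p.2 μ)
      (contDiff_infty.1 (hcomp μ) 2) 0 t
    simp only [hvar] at h
    rwa [((hξd t μ).fun_sub ((hud t μ).fun_mul (hξd t 0))).deriv] at h
  have hεL (t) : deriv (fun ε => lagrangian g (Q ε t) fun μ => deriv (fun s => Q ε s μ) t) 0
      = lagrangian A (q t) (u t) - ((n : ℝ) - 1) * lagrangian B (q t) (u t)
        - deriv (fun s => ξ 0 (q s) * lagrangian g (q s) (u s)) t := by
    rw [(hasDerivAt_lagrangian hgd (hεx t) (hεv t)).deriv, (hTd t).deriv, hA, hB,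
      lagrangian_succ g (pd (ξ 0)), ← lagrangianDeriv_field]
    refine (lagrangianDeriv_comb g (q t) (u t) _ _ (u t) _ (u t) _ _).trans ?_
    rw [lagrangianDeriv_velocity]
    ring
  have hΦ : ContDiff ℝ 1 fun p : ℝ × ℝ =>
      lagrangian g (Q p.1 p.2) fun μ => deriv (fun s => Q p.1 s μ) p.2 := by
    refine ContDiff.sum fun ν _ => (contDiff_prod fun l _ => hvelQ (ν l)).mul ?_
    exact ((hg ν).1.of_le (by simp)).comp (hsmooth.of_le (by simp))
  have hmain := hasDerivAt_intervalIntegral_of_contDiff _ hΦ 0 (2 * π) 0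
  simp only [hεL] at hmain
  rw [intervalIntegral.integral_sub, intervalIntegral.integral_sub,
    intervalIntegral.integral_const_mul, hTzero, sub_zero] at hmain
  · simp only [Sop_eq_lagrangian]
    convert! hmain.ofReal_comp.const_mul (1 / (2 * π * Complex.I)) using 1
    push_cast
    ring
  · exact hAc.intervalIntegrable _ _
  · exact (hBc.const_mul _).intervalIntegrable _ _
  · exact (hAc.sub (hBc.const_mul _)).intervalIntegrable _ _
  · exact (hTs.continuous_deriv le_rfl).intervalIntegrable _ _
end

section
/- (The algebra Vir ⋉̃_{k0} ĝl(N)_{k1,k2} of eq. (3.7) is a Lie algebra.) For all real constants c, k0, k1, k2, the bilinear bracket on the real vector space W ⊕ L gl(N) ⊕ ℝC defined by [L_m, L_n] = (m−n) L_{m+n} + (c/12)(m³−m) δ_{m+n,0} C; [L_m, X(n)] = −[X(n), L_m] = −n X(m+n) + (k0/2) m² δ_{m+n,0} tr(X) C; [X(m), Y(n)] = [X,Y](m+n) + m δ_{m+n,0} ( k1 tr(XY) + k2 tr(X) tr(Y) ) C; [C, ·] = 0; is antisymmetric and satisfies the Jacobi identity, i.e. it makes W ⊕ L gl(N) ⊕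 ℝC a Lie algebra over ℝ. -/
/-- The underlying vector space `W ⊕ L gl(N) ⊕ ℝC` of the extended algebra
`Vir ⋉̃_{k₀} ĝl(N)_{k₁,k₂}`: a Witt part (finitely supported coefficients of the
`L_m`), a loop-algebra part (finitely supported `gl(N)`-valued coefficients of the
modes `X(m) = X ⊗ tᵐ`), and the central line `ℝC`. -/
abbrev VirGl (N : ℕ) : Type :=
  (ℤ →₀ ℝ) × (ℤ →₀ Matrix (Fin N) (Fin N) ℝ) × ℝ

/-- The bracket of eq. (3.7), defined bilinearly by
`[L_m, L_n] = (m−n) L_{m+n} + (c/12)(m³−m) δ_{m+n,0} C`,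
`[L_m, X(n)] = −n X(m+n) + (k₀/2) m² δ_{m+n,0} tr(X) C`,
`[X(m), Y(n)] = (XY−YX)(m+n) + m δ_{m+n,0} (k₁ tr(XY) + k₂ tr(X)tr(Y)) C`,
`[C, ·] = 0`. -/
noncomputable def virGlBracket (N : ℕ) (c k0 k1 k2 : ℝ) (x y : VirGl N) : VirGl N :=
  ⟨x.1.sum fun m a => y.1.sum fun n b =>
      Finsupp.single (m + n) (a * b * ((m : ℝ) - (n : ℝ))),
   (x.1.sum fun m a => y.2.1.sum fun n X =>
        Finsupp.single (m + n) ((a * (-(n : ℝ))) • X))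
    + (x.2.1.sum fun m X => y.1.sum fun n b =>
        Finsupp.single (m + n) ((b * (m : ℝ)) • X))
    + (x.2.1.sum fun m X => y.2.1.sum fun n Y =>
        Finsupp.single (m + n) (X * Y - Y * X)),
   (x.1.sum fun m a => a * y.1 (-m) * (c / 12) * ((m : ℝ) ^ 3 - (m : ℝ)))
    + ((x.1.sum fun m a => a * (k0 / 2) * (m : ℝ) ^ 2 * (y.2.1 (-m)).trace)
        - (y.1.sum fun n b => b * (k0 / 2) * (n : ℝ) ^ 2 * (x.2.1 (-n)).trace))
    + (x.2.1.sum fun m X =>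
        (m : ℝ) * (k1 * (X * y.2.1 (-m)).trace + k2 * X.trace * (y.2.1 (-m)).trace))⟩

namespace VirGl

variable {N : ℕ}

/-- The element `a L_m`. -/
noncomputable def witt (m : ℤ) (a : ℝ) : VirGl N := (Finsupp.single m a, 0, 0)

/-- The element `X(m) = X ⊗ tᵐ`. -/
noncomputable def loop (m : ℤ) (X : Matrix (Fin N) (Fin N) ℝ) : VirGl N :=
  (0, Finsupp.single m X, 0)

/-- The element `r C`. -/
def central (r : ℝ) : VirGl N := (0, 0, r)

theorem induction_generators {P : VirGl N → Prop} (x : VirGl N)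
    (add : ∀ x y, P x → P y → P (x + y)) (witt : ∀ m a, P (witt m a))
    (loop : ∀ m X, P (loop m X)) (central : ∀ r, P (central r)) : P x := by
  obtain ⟨f, g, r⟩ := x
  have hf : P (f, 0, 0) := by
    induction f using Finsupp.induction_linear with
    | zero => simpa [VirGl.witt] using witt 0 0
    | add f g hf hg => simpa using add _ _ hf hg
    | single m a => exact witt m a
  have hg : P (0, g, 0) := by
    induction g using Finsupp.induction_linear with
    | zero => simpa [VirGl.loop] using loop 0 0
    | add f g hf hg => simpa using add _ _ hf hg
    | single m X => exact loop m X
  simpa [VirGl.central] using add _ _ (add _ _ hf hg) (central r)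

variable (c k0 k1 k2 : ℝ)

theorem bracket_add_left (x y z : VirGl N) :
    virGlBracket N c k0 k1 k2 (x + y) z
      = virGlBracket N c k0 k1 k2 x z + virGlBracket N c k0 k1 k2 y z := by
  unfold virGlBracket
  simp only [Prod.fst_add, Prod.snd_add, Prod.mk_add_mk, Finsupp.add_apply, Matrix.trace_add,
    mul_add, Finsupp.sum_add]
  rw [Finsupp.sum_add_index', Finsupp.sum_add_index', Finsupp.sum_add_index',
    Finsupp.sum_add_index', Finsupp.sum_add_index', Finsupp.sum_add_index',
    Finsupp.sum_add_index', Finsupp.sum_add_index']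
  · refine Prod.ext rfl (Prod.ext ?_ ?_) <;> dsimp only <;> abel
  all_goals intros
  all_goals first
    | simp [add_mul, mul_add]; done
    | simp only [← Finsupp.sum_add, ← Finsupp.single_add, add_mul, mul_add, add_smul,
        add_sub_add_comm]

theorem bracket_add_right (x y z : VirGl N) :
    virGlBracket N c k0 k1 k2 x (y + z)
      = virGlBracket N c k0 k1 k2 x y + virGlBracket N c k0 k1 k2 x z := by
  have sum_add {A B : Type} [AddCommMonoid A] [AddCommMonoid B] (f g : ℤ →₀ A) (m : ℤ)
      (F : ℤ → A → B) (h0 : ∀ n, F n 0 = 0) (hadd : ∀ n a b, F n (a + b) = F n a + F n b) :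
      ((f + g).sum fun n a => Finsupp.single (m + n) (F n a))
        = (f.sum fun n a => Finsupp.single (m + n) (F n a))
          + g.sum fun n a => Finsupp.single (m + n) (F n a) :=
    Finsupp.sum_add_index' (by simp [h0]) (by simp [hadd])
  have hWW (m : ℤ) (a : ℝ) := sum_add y.1 z.1 m (fun n b => a * b * ((m : ℝ) - n)) (by simp)
    (by intros; ring)
  have hWL (m : ℤ) (a : ℝ) := sum_add y.2.1 z.2.1 m (fun n X => (a * -(n : ℝ)) • X) (by simp)
    (by intros; rw [smul_add])
  have hLW (m : ℤ) (X : Matrix (Fin N) (Fin N) ℝ) :=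
    sum_add y.1 z.1 m (fun n b => (b * (m : ℝ)) • X) (by simp) (by intros; rw [add_mul, add_smul])
  have hLL (m : ℤ) (X : Matrix (Fin N) (Fin N) ℝ) :=
    sum_add y.2.1 z.2.1 m (fun n Y => X * Y - Y * X) (by simp) (by intros; noncomm_ring)
  have hC : ((y.1 + z.1).sum fun n b => b * (k0 / 2) * (n : ℝ) ^ 2 * (x.2.1 (-n)).trace)
      = (y.1.sum fun n b => b * (k0 / 2) * (n : ℝ) ^ 2 * (x.2.1 (-n)).trace)
        + z.1.sum fun n b => b * (k0 / 2) * (n : ℝ) ^ 2 * (x.2.1 (-n)).trace :=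
    Finsupp.sum_add_index' (by simp) (by intros; ring)
  unfold virGlBracket
  simp only [Prod.fst_add, Prod.snd_add, Prod.mk_add_mk, hWW, hWL, hLW, hLL, hC,
    Finsupp.add_apply, Matrix.trace_add, mul_add, add_mul, Finsupp.sum_add]
  refine Prod.ext rfl (Prod.ext ?_ ?_) <;> dsimp only <;> abel

theorem bracket_witt_witt (m n : ℤ) (a b : ℝ) :
    virGlBracket N c k0 k1 k2 (witt m a) (witt n b) = witt (m + n) (a * b * (m - n))
      + central (if m + n = 0 then a * b * (c / 12) * ((m : ℝ) ^ 3 - m) else 0) := by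
  simp [virGlBracket, witt, central, Finsupp.single_apply, eq_neg_iff_add_eq_zero, add_comm n m]

theorem bracket_witt_loop (m n : ℤ) (a : ℝ) (X : Matrix (Fin N) (Fin N) ℝ) :
    virGlBracket N c k0 k1 k2 (witt m a) (loop n X) = loop (m + n) ((a * -(n : ℝ)) • X)
      + central (if m + n = 0 then a * (k0 / 2) * (m : ℝ) ^ 2 * X.trace else 0) := by
  simp [virGlBracket, witt, loop, central, Finsupp.single_apply, eq_neg_iff_add_eq_zero,
    add_comm n m, apply_ite Matrix.trace]

theorem bracket_loop_witt (m n : ℤ) (b : ℝ) (X : Matrix (Fin N) (Fin N) ℝ) :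
    virGlBracket N c k0 k1 k2 (loop m X) (witt n b) = loop (m + n) ((b * (m : ℝ)) • X)
      - central (if m + n = 0 then b * (k0 / 2) * (n : ℝ) ^ 2 * X.trace else 0) := by
  simp [virGlBracket, witt, loop, central, Finsupp.single_apply, eq_neg_iff_add_eq_zero,
    apply_ite Matrix.trace]

theorem bracket_loop_loop (m n : ℤ) (X Y : Matrix (Fin N) (Fin N) ℝ) :
    virGlBracket N c k0 k1 k2 (loop m X) (loop n Y) = loop (m + n) (X * Y - Y * X)
      + central (if m + n = 0 then
          (m : ℝ) * (k1 * (X * Y).trace + k2 * X.trace * Y.trace) else 0) := by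
  by_cases h : m + n = 0 <;>
  simp [virGlBracket, loop, central, Finsupp.single_apply, eq_neg_iff_add_eq_zero,
    add_comm n m, h]

@[simp]
theorem bracket_central_left (r : ℝ) (x : VirGl N) :
    virGlBracket N c k0 k1 k2 (central r) x = 0 := by
  simp [virGlBracket, central]

@[simp]
theorem bracket_central_right (r : ℝ) (x : VirGl N) :
    virGlBracket N c k0 k1 k2 x (central r) = 0 := by
  simp [virGlBracket, central]

theorem bracket_antisymm (x y : VirGl N) :
    virGlBracket N c k0 k1 k2 x y = -virGlBracket N c k0 k1 k2 y x := by
  have witt_loop (m n : ℤ) (a : ℝ) (X : Matrix (Fin N) (Fin N) ℝ) :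
      virGlBracket N c k0 k1 k2 (witt m a) (loop n X)
        = -virGlBracket N c k0 k1 k2 (loop n X) (witt m a) := by
    rw [bracket_witt_loop, bracket_loop_witt, add_comm n m]
    simp [loop, central]
  induction x using induction_generators with
  | add x x' hx hx' => rw [bracket_add_left, bracket_add_right, hx, hx', neg_add]
  | central r => simp
  | witt m a =>
    induction y using induction_generators with
    | add y y' hy hy' => rw [bracket_add_left, bracket_add_right, hy, hy', neg_add]
    | central r => simp
    | witt n b =>
      rw [bracket_witt_witt, bracket_witt_witt, add_comm n m]
      refine Prod.ext ?_ (Prod.ext ?_ ?_)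
      · simp only [witt, central, Prod.fst_add, Prod.fst_neg, add_zero, ← Finsupp.single_neg]
        congr 1
        ring
      · simp [witt, central]
      · by_cases h : m + n = 0
        · obtain rfl : n = -m := by lia
          simp [witt, central]
          ring
        · simp [witt, central, h]
    | loop n Y => exact witt_loop m n a Y
  | loop m X =>
    induction y using induction_generators with
    | add y y' hy hy' => rw [bracket_add_left, bracket_add_right, hy, hy', neg_add]
    | central r => simp
    | witt n b => rw [witt_loop, neg_neg]
    | loop n Y =>
      rw [bracket_loop_loop, bracket_loop_loop, add_comm n m]
      refine Prod.ext ?_ (Prod.ext ?_ ?_)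
      · simp [loop, central]
      · simp [loop, central]
      · by_cases h : m + n = 0
        · obtain rfl : n = -m := by lia
          simp only [loop, central, Matrix.trace_mul_comm Y X, h, if_true,
            Prod.snd_add, Prod.snd_neg, Int.cast_neg]
          ring
        · simp [loop, central, h]

/-- The cyclic sum `[[x, y], z] + [[y, z], x] + [[z, x], y]`. -/
noncomputable def jacobiator (x y z : VirGl N) : VirGl N :=
  virGlBracket N c k0 k1 k2 (virGlBracket N c k0 k1 k2 x y) z
    + virGlBracket N c k0 k1 k2 (virGlBracket N c k0 k1 k2 y z) x
    + virGlBracket N c k0 k1 k2 (virGlBracket N c k0 k1 k2 z x) y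

theorem jacobiator_rotate (x y z : VirGl N) :
    jacobiator c k0 k1 k2 x y z = jacobiator c k0 k1 k2 y z x := by
  unfold jacobiator
  abel

theorem jacobiator_add (x x' y z : VirGl N) :
    jacobiator c k0 k1 k2 (x + x') y z
      = jacobiator c k0 k1 k2 x y z + jacobiator c k0 k1 k2 x' y z := by
  simp only [jacobiator, bracket_add_left, bracket_add_right]
  abel

theorem jacobiator_central (r : ℝ) (y z : VirGl N) :
    jacobiator c k0 k1 k2 (central r) y z = 0 := by
  have zero_left (x : VirGl N) : virGlBracket N c k0 k1 k2 0 x = 0 :=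
    bracket_central_left c k0 k1 k2 0 x
  simp [jacobiator, zero_left]

theorem neg_central (r : ℝ) : -central r = (central (-r) : VirGl N) := by
  simp [central]

theorem jacobi_witt_witt_witt (m n p : ℤ) (a b d : ℝ) :
    jacobiator c k0 k1 k2 (witt m a) (witt n b) (witt p d : VirGl N) = 0 := by
  simp only [jacobiator, bracket_witt_witt, bracket_add_left, bracket_central_left, add_zero]
  rw [show n + p + m = m + n + p by ring, show p + m + n = m + n + p by ring]
  refine Prod.ext ?_ (Prod.ext ?_ ?_)
  · simp only [witt, central, Prod.fst_add, Prod.fst_zero, add_zero, ← Finsupp.single_add]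
    rw [Finsupp.single_eq_zero]
    push_cast
    ring
  · simp [witt, central]
  · by_cases h : m + n + p = 0
    · obtain rfl : p = -(m + n) := by lia
      simp [witt, central]
      ring
    · simp [witt, central, h]

theorem jacobi_witt_witt_loop (m n p : ℤ) (a b : ℝ) (X : Matrix (Fin N) (Fin N) ℝ) :
    jacobiator c k0 k1 k2 (witt m a) (witt n b) (loop p X) = 0 := by
  simp only [jacobiator, bracket_witt_witt, bracket_witt_loop, bracket_loop_witt, sub_eq_add_neg,
    neg_central, bracket_add_left, bracket_central_left, add_zero]
  rw [show n + p + m = m + n + p by ring, show p + m + n = m + n + p by ring]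
  refine Prod.ext ?_ (Prod.ext ?_ ?_)
  · simp [loop, central]
  · simp only [loop, central, Prod.fst_add, Prod.snd_add, Prod.fst_zero, Prod.snd_zero, add_zero,
      ← Finsupp.single_add]
    rw [Finsupp.single_eq_zero]
    push_cast
    module
  · by_cases h : m + n + p = 0
    · obtain rfl : p = -(m + n) := by lia
      simp [loop, central]
      ring
    · simp [loop, central, h]

theorem jacobi_witt_loop_loop (m n p : ℤ) (a : ℝ) (X Y : Matrix (Fin N) (Fin N) ℝ) :
    jacobiator c k0 k1 k2 (witt m a) (loop n X) (loop p Y) = 0 := by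
  simp only [jacobiator, bracket_witt_loop, bracket_loop_witt, bracket_loop_loop, sub_eq_add_neg,
    neg_central, bracket_add_left, bracket_central_left, add_zero]
  rw [show n + p + m = m + n + p by ring, show p + m + n = m + n + p by ring]
  refine Prod.ext ?_ (Prod.ext ?_ ?_)
  · simp [loop, central]
  · simp only [loop, central, Prod.fst_add, Prod.snd_add, Prod.fst_zero, Prod.snd_zero, add_zero,
      ← Finsupp.single_add]
    rw [Finsupp.single_eq_zero]
    simp only [smul_mul_assoc, mul_smul_comm]
    push_cast
    module
  · by_cases h : m + n + p = 0
    · obtain rfl : p = -(m + n) := by lia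
      simp [loop, central, Matrix.trace_mul_comm Y X]
      ring
    · simp [loop, central, h]

theorem jacobi_loop_loop_loop (m n p : ℤ) (X Y Z : Matrix (Fin N) (Fin N) ℝ) :
    jacobiator c k0 k1 k2 (loop m X) (loop n Y) (loop p Z) = 0 := by
  simp only [jacobiator, bracket_loop_loop, bracket_add_left, bracket_central_left, add_zero]
  rw [show n + p + m = m + n + p by ring, show p + m + n = m + n + p by ring]
  refine Prod.ext ?_ (Prod.ext ?_ ?_)
  · simp [loop, central]
  · simp only [loop, central, Prod.fst_add, Prod.snd_add, Prod.fst_zero, Prod.snd_zero, add_zero,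
      ← Finsupp.single_add]
    rw [Finsupp.single_eq_zero]
    noncomm_ring
  · by_cases h : m + n + p = 0
    · obtain rfl : p = -(m + n) := by lia
      have hXYZ : (Y * Z * X).trace = (X * Y * Z).trace :=
        Matrix.trace_mul_cycle Y Z X
      have hZXY : (Z * X * Y).trace = (X * Y * Z).trace := (Matrix.trace_mul_cycle X Y Z).symm
      have hXZY : (X * Z * Y).trace = (Y * X * Z).trace := Matrix.trace_mul_cycle X Z Y
      have hZYX : (Z * Y * X).trace = (Y * X * Z).trace := (Matrix.trace_mul_cycle Y X Z).symm
      simp [loop, central, sub_mul, Matrix.trace_mul_comm Y X, Matrix.trace_mul_comm Z X,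
        Matrix.trace_mul_comm Z Y, hXYZ, hZXY, hXZY, hZYX]
      ring
    · simp [loop, central, h]

theorem jacobiator_eq_zero (x y z : VirGl N) : jacobiator c k0 k1 k2 x y z = 0 := by
  induction x using induction_generators with
  | add x x' hx hx' => rw [jacobiator_add, hx, hx', add_zero]
  | central r => exact jacobiator_central ..
  | witt m a =>
    induction y using induction_generators with
    | add y y' hy hy' =>
      rw [jacobiator_rotate] at hy hy' ⊢
      rw [jacobiator_add, hy, hy', add_zero]
    | central r => rw [jacobiator_rotate, jacobiator_central]
    | witt n b =>
      induction z using induction_generators with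
      | add z z' hz hz' =>
        rw [← jacobiator_rotate] at hz hz' ⊢
        rw [jacobiator_add, hz, hz', add_zero]
      | central r => rw [← jacobiator_rotate, jacobiator_central]
      | witt p d => exact jacobi_witt_witt_witt ..
      | loop p Z => exact jacobi_witt_witt_loop ..
    | loop n Y =>
      induction z using induction_generators with
      | add z z' hz hz' =>
        rw [← jacobiator_rotate] at hz hz' ⊢
        rw [jacobiator_add, hz, hz', add_zero]
      | central r => rw [← jacobiator_rotate, jacobiator_central]
      | witt p d => rw [← jacobiator_rotate, jacobi_witt_witt_loop]
      | loop p Z => exact jacobi_witt_loop_loop ..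
  | loop m X =>
    induction y using induction_generators with
    | add y y' hy hy' =>
      rw [jacobiator_rotate] at hy hy' ⊢
      rw [jacobiator_add, hy, hy', add_zero]
    | central r => rw [jacobiator_rotate, jacobiator_central]
    | witt n b =>
      induction z using induction_generators with
      | add z z' hz hz' =>
        rw [← jacobiator_rotate] at hz hz' ⊢
        rw [jacobiator_add, hz, hz', add_zero]
      | central r => rw [← jacobiator_rotate, jacobiator_central]
      | witt p d => rw [jacobiator_rotate, jacobi_witt_witt_loop]
      | loop p Z => rw [jacobiator_rotate, jacobi_witt_loop_loop]
    | loop n Y =>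
      induction z using induction_generators with
      | add z z' hz hz' =>
        rw [← jacobiator_rotate] at hz hz' ⊢
        rw [jacobiator_add, hz, hz', add_zero]
      | central r => rw [← jacobiator_rotate, jacobiator_central]
      | witt p d => rw [← jacobiator_rotate, jacobi_witt_loop_loop]
      | loop p Z => exact jacobi_loop_loop_loop ..

end VirGl

/-- The bracket of eq. (3.7) on `W ⊕ L gl(N) ⊕ ℝC` is antisymmetric and satisfies the
Jacobi identity, i.e. `Vir ⋉̃_{k₀} ĝl(N)_{k₁,k₂}` is a Lie algebra over `ℝ`. -/
theorem virGl_isLieAlgebra (N : ℕ) (hN : 1 ≤ N) (c k0 k1 k2 : ℝ) :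
    (∀ x y : VirGl N, virGlBracket N c k0 k1 k2 x y = - virGlBracket N c k0 k1 k2 y x) ∧
    (∀ x y z : VirGl N,
      virGlBracket N c k0 k1 k2 (virGlBracket N c k0 k1 k2 x y) z
        + virGlBracket N c k0 k1 k2 (virGlBracket N c k0 k1 k2 y z) x
        + virGlBracket N c k0 k1 k2 (virGlBracket N c k0 k1 k2 z x) y = 0) := by
  exact ⟨VirGl.bracket_antisymm c k0 k1 k2, VirGl.jacobiator_eq_zero c k0 k1 k2⟩
end

section
/- (Cocycle underlying the g^a-term of eqs. (4.2)–(4.3).) Let 𝔤 be a finite-dimensional real Lie algebra and φ : 𝔤 → ℝ a linear functional vanishing on [𝔤,𝔤]. Let V = W ⊕ L𝔤 be the semidirect sum with brackets [L_m, L_n] = (m−n) L_{m+n}, [L_m, X(n)] = −n X(m+n), [X(m), Y(n)] = [X,Y](m+n). Define the antisymmetric bilinear form ω on V by ω(L_m, X(n)) = −ω(X(n), L_m) = m² δ_{m+n,0} φ(X) for X ∈ 𝔤, and ω = 0 on W×W and on L𝔤×L𝔤. Then ω is a 2-cocycle on V: for all x, y, z ∈ V, ω([x,y], z) + ω([y,z],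 x) + ω([z,x], y) = 0. -/
/-- The bracket of the semidirect sum `W ⋉ L𝔤`:
`[L_m, L_n] = (m−n) L_{m+n}`, `[L_m, X(n)] = −n X(m+n)`,
`[X(m), Y(n)] = [X,Y](m+n)`; elements are pairs of finitely supported families of
Witt coefficients and loop-algebra coefficients. -/
noncomputable def wLoopBracket (𝔤 : Type*) [LieRing 𝔤] [LieAlgebra ℝ 𝔤]
    (x y : (ℤ →₀ ℝ) × (ℤ →₀ 𝔤)) : (ℤ →₀ ℝ) × (ℤ →₀ 𝔤) :=
  ⟨x.1.sum fun m a => y.1.sum fun n b =>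
      Finsupp.single (m + n) (a * b * ((m : ℝ) - (n : ℝ))),
   (x.1.sum fun m a => y.2.sum fun n X =>
        Finsupp.single (m + n) ((a * (-(n : ℝ))) • X))
    + (x.2.sum fun m X => y.1.sum fun n b =>
        Finsupp.single (m + n) ((b * (m : ℝ)) • X))
    + (x.2.sum fun m X => y.2.sum fun n Y => Finsupp.single (m + n) ⁅X, Y⁆)⟩

/-- The antisymmetric bilinear form `ω` on `W ⋉ L𝔤` with
`ω(L_m, X(n)) = −ω(X(n), L_m) = m² δ_{m+n,0} φ(X)` and `ω = 0` on `W×W` and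
`L𝔤×L𝔤`. -/
noncomputable def wLoopOmega (𝔤 : Type*) [LieRing 𝔤] [LieAlgebra ℝ 𝔤]
    (φ : 𝔤 →ₗ[ℝ] ℝ) (x y : (ℤ →₀ ℝ) × (ℤ →₀ 𝔤)) : ℝ :=
  (x.1.sum fun m a => a * (m : ℝ) ^ 2 * φ (y.2 (-m)))
    - (y.1.sum fun n b => b * (n : ℝ) ^ 2 * φ (x.2 (-n)))

section

variable {𝔤 : Type*} [LieRing 𝔤] [LieAlgebra ℝ 𝔤]

/-- Evaluating the shift by `m` of the weighted family `n ↦ c n • Z n`. -/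
lemma sum_single_add_smul_apply (m k : ℤ) (c : ℤ → ℝ) (Z : ℤ →₀ 𝔤) :
    (Z.sum fun n X => Finsupp.single (m + n) (c n • X)) k = c (k - m) • Z (k - m) := by
  have h (n : ℤ) : m + n = k ↔ k - m = n := by constructor <;> intro h <;> lia
  classical
  simp only [Finsupp.sum_apply, Finsupp.single_apply, h]
  rw [Finsupp.sum_ite_eq]
  split_ifs with hZ
  · rfl
  · rw [Finsupp.notMem_support_iff.mp hZ, smul_zero]

/-- The value of `φ` on the loop component of the bracket, if `φ` vanishes on `[𝔤, 𝔤]`. -/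
lemma apply_wLoopBracket_snd (φ : 𝔤 →ₗ[ℝ] ℝ) (hφ : ∀ X Y : 𝔤, φ ⁅X, Y⁆ = 0)
    (x y : (ℤ →₀ ℝ) × (ℤ →₀ 𝔤)) (k : ℤ) :
    φ ((wLoopBracket 𝔤 x y).2 (-k)) =
      (x.1.sum fun m a => a * ((k : ℝ) + m) * φ (y.2 (-(k + m))))
        - y.1.sum fun m b => b * ((k : ℝ) + m) * φ (x.2 (-(k + m))) := by
  have hloop : φ ((x.2.sum fun m X => y.2.sum fun n Y =>
      Finsupp.single (m + n) ⁅X, Y⁆) (-k)) = 0 := by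
    classical
    simp only [Finsupp.sum_apply, Finsupp.single_apply]
    simp only [Finsupp.sum, map_sum, apply_ite φ, hφ, map_zero, ite_self,
      Finset.sum_const_zero]
  have hswap : (x.2.sum fun m X => y.1.sum fun n b =>
        Finsupp.single (m + n) ((b * (m : ℝ)) • X))
      = y.1.sum fun n b => x.2.sum fun m X =>
        Finsupp.single (n + m) ((b * (m : ℝ)) • X) := by
    rw [Finsupp.sum_comm]
    simp only [add_comm]
  have hneg (m : ℤ) : -k - m = -(k + m) := by ring
  simp only [wLoopBracket, Finsupp.add_apply, map_add, hloop, hswap, add_zero]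
  rw [Finsupp.sum_apply, Finsupp.sum_apply, sub_eq_add_neg]
  simp only [fun (m : ℤ) (a : ℝ) => sum_single_add_smul_apply m (-k)
      (fun n => a * -(n : ℝ)) y.2,
    fun (m : ℤ) (a : ℝ) => sum_single_add_smul_apply m (-k) (fun n => a * (n : ℝ)) x.2]
  simp only [Finsupp.sum, map_sum, map_smul, smul_eq_mul, hneg, ← Finset.sum_neg_distrib]
  push_cast
  congr 1 <;> exact Finset.sum_congr rfl fun _ _ => by ring

/-- The trilinear form `(a, b, Z) ↦ ∑ a_m b_n n² (n + m) φ(Z_{-(n + m)})`, which is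
the linear extension of `ω(L_n, [L_m, X(k)])`. -/
noncomputable def wLoopTrilinear (φ : 𝔤 →ₗ[ℝ] ℝ) (a b : ℤ →₀ ℝ) (Z : ℤ →₀ 𝔤) : ℝ :=
  b.sum fun n t => a.sum fun m s =>
    s * t * (n : ℝ) ^ 2 * ((n : ℝ) + m) * φ (Z (-(n + m)))

lemma sum_wLoopBracket_fst (φ : 𝔤 →ₗ[ℝ] ℝ) (x y : (ℤ →₀ ℝ) × (ℤ →₀ 𝔤)) (Z : ℤ →₀ 𝔤) :
    ((wLoopBracket 𝔤 x y).1.sum fun k c => c * (k : ℝ) ^ 2 * φ (Z (-k))) =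
      wLoopTrilinear φ y.1 x.1 Z - wLoopTrilinear φ x.1 y.1 Z := by
  let h : ℤ → ℝ → ℝ := fun k c => c * (k : ℝ) ^ 2 * φ (Z (-k))
  have hzero (k : ℤ) : h k 0 = 0 := by simp only [h]; ring
  have hadd (k : ℤ) (c d : ℝ) : h k (c + d) = h k c + h k d := by simp only [h]; ring
  change (wLoopBracket 𝔤 x y).1.sum h = _
  simp only [wLoopBracket, wLoopTrilinear]
  rw [Finsupp.sum_sum_index hzero hadd]
  simp only [Finsupp.sum_sum_index hzero hadd, Finsupp.sum_single_index (hzero _)]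
  rw [Finsupp.sum_comm y.1 x.1]
  simp only [Finsupp.sum, ← Finset.sum_sub_distrib]
  refine Finset.sum_congr rfl fun m _ => Finset.sum_congr rfl fun n _ => ?_
  simp only [h, add_comm n m]
  push_cast
  ring

lemma wLoopOmega_wLoopBracket (φ : 𝔤 →ₗ[ℝ] ℝ) (hφ : ∀ X Y : 𝔤, φ ⁅X, Y⁆ = 0)
    (x y z : (ℤ →₀ ℝ) × (ℤ →₀ 𝔤)) :
    wLoopOmega 𝔤 φ (wLoopBracket 𝔤 x y) z =
      wLoopTrilinear φ y.1 x.1 z.2 - wLoopTrilinear φ x.1 y.1 z.2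
        - (wLoopTrilinear φ x.1 z.1 y.2 - wLoopTrilinear φ y.1 z.1 x.2) := by
  rw [wLoopOmega, sum_wLoopBracket_fst]
  congr 1
  simp only [apply_wLoopBracket_snd φ hφ, wLoopTrilinear, Finsupp.sum, mul_sub,
    Finset.mul_sum, Finset.sum_sub_distrib]
  congr 1 <;>
    exact Finset.sum_congr rfl fun _ _ => Finset.sum_congr rfl fun _ _ => by ring

end


/-- Cocycle underlying the `g^a`-term of eqs. (4.2)–(4.3): for a finite-dimensional
real Lie algebra `𝔤` and a linear functional `φ` vanishing on `[𝔤,𝔤]`, the form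
`ω(L_m, X(n)) = m² δ_{m+n,0} φ(X)` is a 2-cocycle on `W ⋉ L𝔤`. -/
theorem wLoopOmega_cocycle (𝔤 : Type*) [LieRing 𝔤] [LieAlgebra ℝ 𝔤]
    [FiniteDimensional ℝ 𝔤] (φ : 𝔤 →ₗ[ℝ] ℝ) (hφ : ∀ X Y : 𝔤, φ ⁅X, Y⁆ = 0) :
    ∀ x y z : (ℤ →₀ ℝ) × (ℤ →₀ 𝔤),
      wLoopOmega 𝔤 φ (wLoopBracket 𝔤 x y) z
        + wLoopOmega 𝔤 φ (wLoopBracket 𝔤 y z) x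
        + wLoopOmega 𝔤 φ (wLoopBracket 𝔤 z x) y = 0 := by
  intro x y z
  simp only [wLoopOmega_wLoopBracket φ hφ]
  ring
end

section
/- (Cocycle underlying the g'^a-term of eq. (4.3).) Let 𝔤 be a finite-dimensional real Lie algebra and φ : 𝔤 → ℝ a linear functional vanishing on [𝔤,𝔤]. Let V = W ⊕ L gl(N) ⊕ L𝔤 with brackets [L_m, L_n] = (m−n) L_{m+n}, [L_m, X(n)] = −n X(m+n) for X in gl(N) or in 𝔤, [X(m), X'(n)] = [X,X'](m+n) within L gl(N) and within L𝔤, and [X(m), Y(n)] = 0 for X ∈ gl(N), Y ∈ 𝔤. Define the antisymmetric bilinear form ω on V by ω(X(m), Y(n)) = −ω(Y(n), X(m)) = m δ_{m+n,0} tr(X) φ(Y) for X ∈ gl(N), Y ∈ 𝔤, and ω = 0 on all other pairs of summands. Then ω is a 2-cocycle on V: for all x, y, z ∈ V, ω([x,y], z) + ω([y,z], x) + ω([z,x], y) = 0. -/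
/-- The bracket on `W ⊕ L gl(N) ⊕ L𝔤`:
`[L_m, L_n] = (m−n) L_{m+n}`, `[L_m, X(n)] = −n X(m+n)` for `X` in `gl(N)` or `𝔤`,
loop brackets within `L gl(N)` and within `L𝔤`, and `[X(m), Y(n)] = 0` for
`X ∈ gl(N)`, `Y ∈ 𝔤`. -/
noncomputable def wGlLoopBracket (N : ℕ) (𝔤 : Type*) [LieRing 𝔤] [LieAlgebra ℝ 𝔤]
    (x y : (ℤ →₀ ℝ) × (ℤ →₀ Matrix (Fin N) (Fin N) ℝ) × (ℤ →₀ 𝔤)) :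
    (ℤ →₀ ℝ) × (ℤ →₀ Matrix (Fin N) (Fin N) ℝ) × (ℤ →₀ 𝔤) :=
  ⟨x.1.sum fun m a => y.1.sum fun n b =>
      Finsupp.single (m + n) (a * b * ((m : ℝ) - (n : ℝ))),
   (x.1.sum fun m a => y.2.1.sum fun n X =>
        Finsupp.single (m + n) ((a * (-(n : ℝ))) • X))
    + (x.2.1.sum fun m X => y.1.sum fun n b =>
        Finsupp.single (m + n) ((b * (m : ℝ)) • X))
    + (x.2.1.sum fun m X => y.2.1.sum fun n Y =>
        Finsupp.single (m + n) (X * Y - Y * X)),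
   (x.1.sum fun m a => y.2.2.sum fun n Y =>
        Finsupp.single (m + n) ((a * (-(n : ℝ))) • Y))
    + (x.2.2.sum fun m Y => y.1.sum fun n b =>
        Finsupp.single (m + n) ((b * (m : ℝ)) • Y))
    + (x.2.2.sum fun m Y => y.2.2.sum fun n Y' => Finsupp.single (m + n) ⁅Y, Y'⁆)⟩

/-- The antisymmetric bilinear form `ω` on `W ⊕ L gl(N) ⊕ L𝔤` with
`ω(X(m), Y(n)) = −ω(Y(n), X(m)) = m δ_{m+n,0} tr(X) φ(Y)` for `X ∈ gl(N)`, `Y ∈ 𝔤`,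
and `ω = 0` on all other pairs of summands. -/
noncomputable def wGlLoopOmega (N : ℕ) (𝔤 : Type*) [LieRing 𝔤] [LieAlgebra ℝ 𝔤]
    (φ : 𝔤 →ₗ[ℝ] ℝ)
    (x y : (ℤ →₀ ℝ) × (ℤ →₀ Matrix (Fin N) (Fin N) ℝ) × (ℤ →₀ 𝔤)) : ℝ :=
  (x.2.1.sum fun m X => (m : ℝ) * X.trace * φ (y.2.2 (-m)))
    - (y.2.1.sum fun n X => (n : ℝ) * X.trace * φ (x.2.2 (-n)))

/-- The action `L_m · t^n = -n t^(m+n)` of the Witt algebra on scalar loops. -/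
noncomputable def wittAction : (ℤ →₀ ℝ) →ₗ[ℝ] (ℤ →₀ ℝ) →ₗ[ℝ] (ℤ →₀ ℝ) :=
  Finsupp.linearCombination ℝ fun m : ℤ =>
    Finsupp.lsum ℝ fun n : ℤ => (-(n : ℝ)) • Finsupp.lsingle (m + n)

/-- The pairing `⟨t^m, t^n⟩ = m δ_{m+n,0}` on scalar loops. -/
noncomputable def loopPairing : (ℤ →₀ ℝ) →ₗ[ℝ] (ℤ →₀ ℝ) →ₗ[ℝ] ℝ :=
  Finsupp.linearCombination ℝ fun m : ℤ => (m : ℝ) • Finsupp.lapply (-m)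

theorem wittAction_single_single (m n : ℤ) (r s : ℝ) :
    wittAction (Finsupp.single m r) (Finsupp.single n s)
      = Finsupp.single (m + n) (r * (-(n : ℝ)) * s) := by
  simp [wittAction, mul_assoc, -Finsupp.single_mul]

theorem loopPairing_single_apply (m : ℤ) (r : ℝ) (g : ℤ →₀ ℝ) :
    loopPairing (Finsupp.single m r) g = r * (m * g (-m)) := by
  simp [loopPairing]

theorem loopPairing_wittAction_add (a f g : ℤ →₀ ℝ) :
    loopPairing (wittAction a f) g + loopPairing f (wittAction a g) = 0 := by
  induction a using Finsupp.induction_linear with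
  | zero => simp
  | add a b ha hb => simp only [map_add, LinearMap.add_apply]; linarith
  | single m r =>
    induction f using Finsupp.induction_linear with
    | zero => simp
    | add a b ha hb => simp only [map_add, LinearMap.add_apply] at *; linarith
    | single n s =>
      induction g using Finsupp.induction_linear with
      | zero => simp
      | add a b ha hb => simp only [map_add] at *; linarith
      | single k t =>
        simp only [wittAction_single_single, loopPairing_single_apply]
        by_cases h : m + n + k = 0
        · obtain rfl : k = -(m + n) := by omega
          rw [Finsupp.single_eq_same, show m + -(m + n) = -n by ring, Finsupp.single_eq_same]
          push_cast
          ring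
        · rw [Finsupp.single_eq_of_ne (by omega), Finsupp.single_eq_of_ne (by omega)]
          ring

section MapRange

variable {M : Type*} [AddCommGroup M] [Module ℝ M] (ψ : M →ₗ[ℝ] ℝ)

theorem mapRange_sum_single_neg_smul (a : ℤ →₀ ℝ) (f : ℤ →₀ M) :
    Finsupp.mapRange.linearMap ψ (a.sum fun m r => f.sum fun n X =>
        Finsupp.single (m + n) ((r * (-(n : ℝ))) • X))
      = wittAction a (Finsupp.mapRange.linearMap ψ f) := by
  simp only [wittAction, Finsupp.linearCombination_apply, map_finsuppSum,
    LinearMap.finsupp_sum_apply, LinearMap.smul_apply, Finsupp.mapRange.linearMap_apply,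
    Finsupp.lsum_apply, Finsupp.mapRange_single]
  refine Finsupp.sum_congr fun m _ => ?_
  rw [Finsupp.sum_mapRange_index (by simp), Finsupp.smul_sum]
  refine Finsupp.sum_congr fun n _ => ?_
  simp [mul_assoc, -Finsupp.single_mul]

theorem mapRange_sum_single_smul (a : ℤ →₀ ℝ) (f : ℤ →₀ M) :
    Finsupp.mapRange.linearMap ψ (f.sum fun m X => a.sum fun n r =>
        Finsupp.single (m + n) ((r * (m : ℝ)) • X))
      = -wittAction a (Finsupp.mapRange.linearMap ψ f) := by
  rw [← mapRange_sum_single_neg_smul, ← map_neg, Finsupp.sum_comm]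
  simp [Finsupp.sum, add_comm]

theorem mapRange_sum_single_eq_zero (b : M → M → M) (hb : ∀ X Y, ψ (b X Y) = 0)
    (f g : ℤ →₀ M) :
    Finsupp.mapRange.linearMap ψ (f.sum fun m X => g.sum fun n Y =>
        Finsupp.single (m + n) (b X Y)) = 0 := by
  simp [map_finsuppSum, hb]

end MapRange

section Components

variable (N : ℕ) (𝔤 : Type*) [LieRing 𝔤] [LieAlgebra ℝ 𝔤]

theorem mapRange_trace_wGlLoopBracket
    (x y : (ℤ →₀ ℝ) × (ℤ →₀ Matrix (Fin N) (Fin N) ℝ) × (ℤ →₀ 𝔤)) :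
    Finsupp.mapRange.linearMap (Matrix.traceLinearMap (Fin N) ℝ ℝ) (wGlLoopBracket N 𝔤 x y).2.1
      = wittAction x.1 (Finsupp.mapRange.linearMap (Matrix.traceLinearMap (Fin N) ℝ ℝ) y.2.1)
        - wittAction y.1 (Finsupp.mapRange.linearMap (Matrix.traceLinearMap (Fin N) ℝ ℝ) x.2.1) := by
  rw [wGlLoopBracket, map_add, map_add, mapRange_sum_single_neg_smul, mapRange_sum_single_smul,
    mapRange_sum_single_eq_zero _ (fun X Y => X * Y - Y * X)
      (fun X Y => by simp [Matrix.trace_mul_comm X Y]), add_zero, sub_eq_add_neg]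

theorem mapRange_wGlLoopBracket (φ : 𝔤 →ₗ[ℝ] ℝ) (hφ : ∀ X Y : 𝔤, φ ⁅X, Y⁆ = 0)
    (x y : (ℤ →₀ ℝ) × (ℤ →₀ Matrix (Fin N) (Fin N) ℝ) × (ℤ →₀ 𝔤)) :
    Finsupp.mapRange.linearMap φ (wGlLoopBracket N 𝔤 x y).2.2
      = wittAction x.1 (Finsupp.mapRange.linearMap φ y.2.2)
        - wittAction y.1 (Finsupp.mapRange.linearMap φ x.2.2) := by
  rw [wGlLoopBracket, map_add, map_add, mapRange_sum_single_neg_smul, mapRange_sum_single_smul,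
    mapRange_sum_single_eq_zero _ (fun X Y => ⁅X, Y⁆) hφ, add_zero, sub_eq_add_neg]

theorem wGlLoopOmega_eq_loopPairing (φ : 𝔤 →ₗ[ℝ] ℝ)
    (x y : (ℤ →₀ ℝ) × (ℤ →₀ Matrix (Fin N) (Fin N) ℝ) × (ℤ →₀ 𝔤)) :
    wGlLoopOmega N 𝔤 φ x y
      = loopPairing (Finsupp.mapRange.linearMap (Matrix.traceLinearMap (Fin N) ℝ ℝ) x.2.1)
          (Finsupp.mapRange.linearMap φ y.2.2)
        - loopPairing (Finsupp.mapRange.linearMap (Matrix.traceLinearMap (Fin N) ℝ ℝ) y.2.1)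
          (Finsupp.mapRange.linearMap φ x.2.2) := by
  have key (f : ℤ →₀ Matrix (Fin N) (Fin N) ℝ) (g : ℤ →₀ 𝔤) :
      loopPairing (Finsupp.mapRange.linearMap (Matrix.traceLinearMap (Fin N) ℝ ℝ) f)
          (Finsupp.mapRange.linearMap φ g)
        = f.sum fun m X => (m : ℝ) * X.trace * φ (g (-m)) := by
    rw [loopPairing, Finsupp.linearCombination_apply, Finsupp.mapRange.linearMap_apply,
      Finsupp.sum_mapRange_index (by simp), LinearMap.finsupp_sum_apply]
    refine Finsupp.sum_congr fun m _ => ?_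
    simp
    ring
  rw [wGlLoopOmega, key, key]

end Components

/-- Cocycle underlying the `g'^a`-term of eq. (4.3): for a finite-dimensional real
Lie algebra `𝔤` and a linear functional `φ` vanishing on `[𝔤,𝔤]`, the form
`ω(X(m), Y(n)) = m δ_{m+n,0} tr(X) φ(Y)` is a 2-cocycle on `W ⊕ L gl(N) ⊕ L𝔤`. -/
theorem wGlLoopOmega_cocycle (N : ℕ) (hN : 1 ≤ N) (𝔤 : Type*) [LieRing 𝔤]
    [LieAlgebra ℝ 𝔤] [FiniteDimensional ℝ 𝔤]
    (φ : 𝔤 →ₗ[ℝ] ℝ) (hφ : ∀ X Y : 𝔤, φ ⁅X, Y⁆ = 0) :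
    ∀ x y z : (ℤ →₀ ℝ) × (ℤ →₀ Matrix (Fin N) (Fin N) ℝ) × (ℤ →₀ 𝔤),
      wGlLoopOmega N 𝔤 φ (wGlLoopBracket N 𝔤 x y) z
        + wGlLoopOmega N 𝔤 φ (wGlLoopBracket N 𝔤 y z) x
        + wGlLoopOmega N 𝔤 φ (wGlLoopBracket N 𝔤 z x) y = 0 := by
  intro x y z
  simp only [wGlLoopOmega_eq_loopPairing, mapRange_trace_wGlLoopBracket,
    mapRange_wGlLoopBracket N 𝔤 φ hφ, map_sub, LinearMap.sub_apply]
  set τ := Finsupp.mapRange.linearMap (α := ℤ) (Matrix.traceLinearMap (Fin N) ℝ ℝ)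
  set ψ := Finsupp.mapRange.linearMap (α := ℤ) φ
  linarith [loopPairing_wittAction_add x.1 (τ y.2.1) (ψ z.2.2),
    loopPairing_wittAction_add x.1 (τ z.2.1) (ψ y.2.2),
    loopPairing_wittAction_add y.1 (τ x.2.1) (ψ z.2.2),
    loopPairing_wittAction_add y.1 (τ z.2.1) (ψ x.2.2),
    loopPairing_wittAction_add z.1 (τ x.2.1) (ψ y.2.2),
    loopPairing_wittAction_add z.1 (τ y.2.1) (ψ x.2.2)]
end
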